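/- Let Φ, Φ̃ : ℂⁿ → ℝ be strictly plurisubharmonic quadratic forms with Φ̃ ≤ Φ pointwise, and let κ♭ : ℂⁿ → ℂⁿ be an ℝ-linear isomorphism with κ♭(Rad(Φ − Φ̃)) = Rad(Φ − Φ̃). Suppose: (i) Ψ is a holomorphic quadratic form on ℂ^{2n} and â ∈ ℂ with 2 Re Ψ(z, w̄) = Φ̃(z) + Φ(w) − R(z, w) where R is a nonnegative quadratic form satisfying c|z − κ♭(w)|² ≤ R(z, w) ≤ C|z − κ♭(w)|² for some C, c > 0; (ii) Ψ̃ is a holomorphic quadratic form on ℂ^{2n} and ã ∈ ℂ with 2 Re Ψ̃(z, w̄) − Φ(z) − Φ̃(w) ≤ −c'|z − (κ♭)^{-1}(w)|² for some c' > 0; (iii) with G u(z) = â ∫ e^{2Ψ(z,w̄)} u(w) e^{-2Φ(w)} dL(w) and G̃ v(z) = ã ∫ e^{2Ψ̃(z,w̄)} v(w) e^{-2Φ̃(w)} dL(w), one has G̃(G u) = u for every entire u with |u(z)| ≤ C₀⟨z⟩^{N} e^{Φ(z)} for some C₀ > 0, N ∈ ℝ. Then for every such u, WF^{1/2}_Φ(Gu)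 = κ♭(WF^{1/2}_Φ(u)) ∩ Rad(Φ − Φ̃). -/

import Mathlib

open Matrix MeasureTheory ENNReal

noncomputable section

/-- The squared Euclidean norm `|z|²` on `ℂⁿ`. -/
def eSq {n : ℕ} (z : Fin n → ℂ) : ℝ := ∑ i, Complex.normSq (z i)

/-- The Japanese bracket `⟨z⟩ = (1 + |z|²)^{1/2}`. -/
def jb {n : ℕ} (z : Fin n → ℂ) : ℝ := Real.sqrt (1 + eSq z)

/-- `Φ : ℂⁿ → ℝ` is a (real) quadratic form of the underlying real coordinates. -/
def IsRQuad {n : ℕ} (Φ : (Fin n → ℂ) → ℝ) : Prop :=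
  ∃ B : (Fin n → ℂ) →ₗ[ℝ] (Fin n → ℂ) →ₗ[ℝ] ℝ, ∀ z, Φ z = B z z

/-- `Φ : ℂⁿ → ℝ` is a strictly plurisubharmonic quadratic form.  For a quadratic form `Φ`,
the Levi form satisfies `(∂²_{z z̄}Φ) w ⋅ w̄ = (Φ(w) + Φ(i w))/2`, so positive definiteness of
the Levi matrix is equivalent to `Φ(w) + Φ(i·w) > 0` for all `w ≠ 0`. -/
def IsSPSH {n : ℕ} (Φ : (Fin n → ℂ) → ℝ) : Prop :=
  IsRQuad Φ ∧ ∀ z : Fin n → ℂ, z ≠ 0 → 0 < Φ z + Φ (Complex.I • z)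

/-- The squared weighted norm `‖u‖_s² = ∫ |u(z)|² ⟨z⟩^{2s} e^{-2Φ(z)} L(dz)` (in `ℝ≥0∞`). -/
def hnorm {n : ℕ} (Φ : (Fin n → ℂ) → ℝ) (s : ℝ) (u : (Fin n → ℂ) → ℂ) : ℝ≥0∞ :=
  ∫⁻ z : Fin n → ℂ, (‖u z‖₊ : ℝ≥0∞) ^ 2 * ENNReal.ofReal (jb z ^ (2 * s) * Real.exp (-2 * Φ z))

/-- A conic subset of `ℂⁿ`. -/
def IsConic {n : ℕ} (V : Set (Fin n → ℂ)) : Prop := ∀ z ∈ V, ∀ t : ℝ, 0 < t → t • z ∈ V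

/-- The `1/2`-Gelfand–Shilov wavefront set of `u` relative to `Φ`: the complement in
`ℂⁿ∖{0}` of the points having an open conic neighborhood in `ℂⁿ∖{0}` on which
`|u(z)| ≤ C e^{Φ(z) - c|z|²}`. -/
def wf {n : ℕ} (Φ : (Fin n → ℂ) → ℝ) (u : (Fin n → ℂ) → ℂ) : Set (Fin n → ℂ) :=
  {z₀ | z₀ ≠ 0 ∧ ¬ ∃ V : Set (Fin n → ℂ), IsOpen V ∧ IsConic V ∧ (0 : Fin n → ℂ) ∉ V ∧ z₀ ∈ V ∧
      ∃ C c : ℝ, 0 < C ∧ 0 < c ∧ ∀ z ∈ V, ‖u z‖ ≤ C * Real.exp (Φ z - c * eSq z)}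

/-- A holomorphic quadratic form on `ℂ^{2n} = ℂⁿ_z × ℂⁿ_θ`. -/
def IsCQuad2 {n : ℕ} (Ψ : (Fin n → ℂ) → (Fin n → ℂ) → ℂ) : Prop :=
  ∃ B : ((Fin n → ℂ) × (Fin n → ℂ)) →ₗ[ℂ] ((Fin n → ℂ) × (Fin n → ℂ)) →ₗ[ℂ] ℂ,
    ∀ z θ, Ψ z θ = B (z, θ) (z, θ)

/-- A real quadratic form on `ℂⁿ × ℂⁿ` viewed as a real vector space. -/
def IsRQuadPair {n : ℕ} (R : (Fin n → ℂ) → (Fin n → ℂ) → ℝ) : Prop :=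
  ∃ B : ((Fin n → ℂ) × (Fin n → ℂ)) →ₗ[ℝ] ((Fin n → ℂ) × (Fin n → ℂ)) →ₗ[ℝ] ℝ,
    ∀ z w, R z w = B (z, w) (z, w)

/-- The Bergman-form integral operator
`G u (z) = a ∫ e^{2Ψ(z, w̄)} u(w) e^{-2Φ(w)} L(dw)`. -/
def berg {n : ℕ} (a : ℂ) (Ψ : (Fin n → ℂ) → (Fin n → ℂ) → ℂ) (Φ : (Fin n → ℂ) → ℝ)
    (u : (Fin n → ℂ) → ℂ) (z : Fin n → ℂ) : ℂ :=
  a * ∫ w : Fin n → ℂ, Complex.exp (2 * Ψ z (star w)) * u w * (Real.exp (-2 * Φ w) : ℂ)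

/-!
`G` and `G̃` are handled by the same estimate. If `2 Re Ψ(z, w̄) ≤ φ₁(z) + φ₂(w) − c|z − κw|²`
with `c > 0`, then `e^{−φ₁} (G f)` is controlled by integrating `e^{−φ₂} f` against a Gaussian
concentrated on the graph of `κ`. If `e^{−φ₂} f` decays like a Gaussian on a cone around `w₀`,
then for `z` near the ray of `κ w₀` the decay of the integrand comes from `f` when `w` is in the
cone, and from `|z − κw|² ≳ |z|² + |w|²` otherwise. Hence `WF_{φ₁}(G f) ⊆ κ(WF_{φ₂}(f))`. Applying
this to `G`, and to `G̃` with `G̃ G u = u`, gives `WF_{Φ̃}(G u) = κ(WF_Φ(u))`.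

It remains to replace the weight `Φ̃` by `Φ`. Since `G u` grows at most like `e^{Φ̃(z) + ε|z|²}` for
every `ε > 0`, it decays relative to `Φ` wherever `Φ̃ < Φ`, while near a direction in the radical
the quantity `Φ − Φ̃` is at most `ε|z|²` and the two notions of decay agree.
-/

section

open scoped Pointwise

variable {n : ℕ}

/-- `V` is an open conic neighborhood of `z₀` in `ℂⁿ ∖ {0}`, as used in the definition of the
wavefront set. -/
structure IsConicNhd (V : Set (Fin n → ℂ)) (z₀ : Fin n → ℂ) : Prop where
  isOpen : IsOpen V
  isConic : IsConic V
  zero_notMem : (0 : Fin n → ℂ) ∉ V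
  mem : z₀ ∈ V

/-- Gaussian decay of `u` on `V` relative to the weight `Φ`. The constant `C` is not required to be
positive; `mem_wf_iff` shows that this does not affect the wavefront set. -/
def HasGaussianDecayOn (Φ : (Fin n → ℂ) → ℝ) (u : (Fin n → ℂ) → ℂ) (V : Set (Fin n → ℂ)) : Prop :=
  ∃ C c : ℝ, 0 < c ∧ ∀ z ∈ V, ‖u z‖ ≤ C * Real.exp (Φ z - c * eSq z)

/-- `u` exceeds `e^Φ` by less than any growing Gaussian. This weakening of polynomial growth
relative to `Φ` is preserved by the operators `berg`. -/
def HasSubgaussianGrowth (Φ : (Fin n → ℂ) → ℝ) (u : (Fin n → ℂ) → ℂ) : Prop :=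
  ∀ ε : ℝ, 0 < ε → ∃ C : ℝ, ∀ z, ‖u z‖ ≤ C * Real.exp (Φ z + ε * eSq z)

/-- The phase `Ψ` concentrates on the graph of `κ`, for the weight `φ₁` in the target and `φ₂` in
the source: this is the common hypothesis on the kernels of `G` and `G̃`. -/
def ConcentratesOnGraph (Ψ : (Fin n → ℂ) → (Fin n → ℂ) → ℂ) (φ₁ φ₂ : (Fin n → ℂ) → ℝ)
    (κ : (Fin n → ℂ) ≃ₗ[ℝ] (Fin n → ℂ)) : Prop :=
  ∃ c : ℝ, 0 < c ∧ ∀ z w, 2 * (Ψ z (star w)).re - φ₁ z - φ₂ w ≤ -c * eSq (z - κ w)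

lemma norm_le_mul_exp_mono {E : Type*} [SeminormedAddCommGroup E] {v : E} {K K' x y : ℝ}
    (h : ‖v‖ ≤ K * Real.exp x) (hK : K ≤ K') (hxy : x ≤ y) : ‖v‖ ≤ K' * Real.exp y := by
  have hK0 : 0 ≤ K := nonneg_of_mul_nonneg_left ((norm_nonneg v).trans h) (Real.exp_pos x)
  exact h.trans (mul_le_mul hK (Real.exp_le_exp.2 hxy) (Real.exp_pos x).le (hK0.trans hK))

/-! ### The squared Euclidean norm -/

lemma eSq_eq_sum_sq_norm (z : Fin n → ℂ) : eSq z = ∑ i, ‖z i‖ ^ 2 := by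
  simp only [eSq, Complex.normSq_eq_norm_sq]

lemma eSq_nonneg (z : Fin n → ℂ) : 0 ≤ eSq z :=
  Finset.sum_nonneg fun _ _ => Complex.normSq_nonneg _

lemma sq_norm_le_eSq (z : Fin n → ℂ) : ‖z‖ ^ 2 ≤ eSq z := by
  have h : ‖z‖ ≤ √(eSq z) := by
    refine (pi_norm_le_iff_of_nonneg (Real.sqrt_nonneg _)).2 fun i => Real.le_sqrt_of_sq_le ?_
    rw [eSq_eq_sum_sq_norm]
    exact Finset.single_le_sum (f := fun i => ‖z i‖ ^ 2) (fun _ _ => sq_nonneg _)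
      (Finset.mem_univ i)
  exact (Real.le_sqrt (norm_nonneg z) (eSq_nonneg z)).1 h

lemma eSq_le_mul_sq_norm (z : Fin n → ℂ) : eSq z ≤ n * ‖z‖ ^ 2 := by
  rw [eSq_eq_sum_sq_norm]
  calc ∑ i, ‖z i‖ ^ 2 ≤ ∑ _i : Fin n, ‖z‖ ^ 2 := by gcongr with i; exact norm_le_pi_norm z i
    _ = n * ‖z‖ ^ 2 := by simp

lemma eSq_pos {z : Fin n → ℂ} (hz : z ≠ 0) : 0 < eSq z :=
  (pow_pos (norm_pos_iff.2 hz) 2).trans_le (sq_norm_le_eSq z)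

lemma eSq_add_le (z w : Fin n → ℂ) : eSq (z + w) ≤ 2 * (eSq z + eSq w) := by
  simp only [eSq_eq_sum_sq_norm, ← Finset.sum_add_distrib, Finset.mul_sum]
  gcongr with i
  calc ‖z i + w i‖ ^ 2 ≤ (‖z i‖ + ‖w i‖) ^ 2 := by gcongr; exact norm_add_le _ _
    _ ≤ 2 * (‖z i‖ ^ 2 + ‖w i‖ ^ 2) := add_sq_le

lemma eSq_neg (z : Fin n → ℂ) : eSq (-z) = eSq z := by
  simp [eSq]

lemma exists_eSq_map_le (L : (Fin n → ℂ) →ₗ[ℝ] (Fin n → ℂ)) :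
    ∃ M : ℝ, 0 ≤ M ∧ ∀ z, eSq (L z) ≤ M * eSq z := by
  refine ⟨n * ‖L.toContinuousLinearMap‖ ^ 2, by positivity, fun z => ?_⟩
  calc eSq (L z) ≤ n * ‖L z‖ ^ 2 := eSq_le_mul_sq_norm _
    _ ≤ n * (‖L.toContinuousLinearMap‖ * ‖z‖) ^ 2 := by
        gcongr; exact L.toContinuousLinearMap.le_opNorm z
    _ = n * ‖L.toContinuousLinearMap‖ ^ 2 * ‖z‖ ^ 2 := by ring
    _ ≤ n * ‖L.toContinuousLinearMap‖ ^ 2 * eSq z := by gcongr; exact sq_norm_le_eSq z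

lemma integrable_exp_neg_mul_eSq {δ : ℝ} (hδ : 0 < δ) :
    Integrable fun w : Fin n → ℂ => Real.exp (-δ * eSq w) := by
  have hℂ : Integrable fun x : ℂ => Real.exp (-δ * ‖x‖ ^ 2) := by
    refine .of_integral_ne_zero ?_
    rw [GaussianFourier.integral_rexp_neg_mul_sq_norm hδ]
    positivity
  simp only [eSq_eq_sum_sq_norm, Finset.mul_sum, Real.exp_sum]
  exact Integrable.fintype_prod fun _ => hℂ

lemma exists_jb_rpow_le_mul_exp (N : ℝ) {ε : ℝ} (hε : 0 < ε) :
    ∃ K : ℝ, ∀ z : Fin n → ℂ, jb z ^ N ≤ K * Real.exp (ε * eSq z) := by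
  set p := max 1 (N / 2)
  have hp : 0 < p := one_pos.trans_le (le_max_left _ _)
  set A := max 1 (p / ε)
  refine ⟨A ^ p, fun z => ?_⟩
  have hz := eSq_nonneg z
  have hlin : 1 + eSq z ≤ A * Real.exp (ε / p * eSq z) :=
    calc 1 + eSq z = 1 + p / ε * (ε / p * eSq z) := by field_simp
      _ ≤ A + A * (ε / p * eSq z) := by
          gcongr
          · exact le_max_left _ _
          · exact le_max_right _ _
      _ = A * (ε / p * eSq z + 1) := by ring
      _ ≤ A * Real.exp (ε / p * eSq z) := by gcongr; exact Real.add_one_le_exp _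
  calc jb z ^ N = (1 + eSq z) ^ (N / 2) := by
        rw [jb, Real.sqrt_eq_rpow, ← Real.rpow_mul (by positivity)]; ring_nf
    _ ≤ (1 + eSq z) ^ p := Real.rpow_le_rpow_of_exponent_le (by linarith) (le_max_right _ _)
    _ ≤ (A * Real.exp (ε / p * eSq z)) ^ p := by gcongr
    _ = A ^ p * Real.exp (ε * eSq z) := by
        rw [Real.mul_rpow (by positivity) (by positivity), ← Real.exp_mul]
        congr 2
        field_simp

lemma HasSubgaussianGrowth.of_norm_le_jb_rpow {Φ : (Fin n → ℂ) → ℝ} {u : (Fin n → ℂ) → ℂ}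
    {C₀ N : ℝ} (hC₀ : 0 ≤ C₀) (h : ∀ z, ‖u z‖ ≤ C₀ * jb z ^ N * Real.exp (Φ z)) :
    HasSubgaussianGrowth Φ u := by
  intro ε hε
  obtain ⟨K, hK⟩ := exists_jb_rpow_le_mul_exp (n := n) N hε
  refine ⟨C₀ * K, fun z => ?_⟩
  calc ‖u z‖ ≤ C₀ * jb z ^ N * Real.exp (Φ z) := h z
    _ ≤ C₀ * (K * Real.exp (ε * eSq z)) * Real.exp (Φ z) := by gcongr; exact hK z
    _ = C₀ * K * Real.exp (Φ z + ε * eSq z) := by rw [Real.exp_add]; ring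

/-! ### Real quadratic forms -/

lemma isRQuad_eSq : IsRQuad (eSq : (Fin n → ℂ) → ℝ) := by
  refine ⟨∑ i, (innerₗ ℂ).compl₁₂ (LinearMap.proj i) (LinearMap.proj i), fun z => ?_⟩
  simp only [LinearMap.sum_apply, LinearMap.compl₁₂_apply, LinearMap.proj_apply, innerₗ_apply_apply,
    real_inner_self_eq_norm_sq, eSq_eq_sum_sq_norm]

namespace IsRQuad

variable {q q' : (Fin n → ℂ) → ℝ}

lemma sub (hq : IsRQuad q) (hq' : IsRQuad q') : IsRQuad (q - q') := by
  obtain ⟨B, hB⟩ := hq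
  obtain ⟨B', hB'⟩ := hq'
  exact ⟨B - B', fun z => by simp [hB, hB']⟩

lemma const_smul (c : ℝ) (hq : IsRQuad q) : IsRQuad (c • q) := by
  obtain ⟨B, hB⟩ := hq
  exact ⟨c • B, fun z => by simp [hB]⟩

lemma continuous (hq : IsRQuad q) : Continuous q := by
  obtain ⟨B, hB⟩ := hq
  rw [funext hB]
  exact B.toContinuousBilinearMap.continuous.clm_apply continuous_id

lemma map_smul (hq : IsRQuad q) (t : ℝ) (z : Fin n → ℂ) : q (t • z) = t ^ 2 * q z := by
  obtain ⟨B, hB⟩ := hq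
  simp only [hB, _root_.map_smul, LinearMap.smul_apply, smul_eq_mul]
  ring

lemma map_zero (hq : IsRQuad q) : q 0 = 0 := by
  simpa using hq.map_smul 0 0

lemma isConicNhd_setOf_pos (hq : IsRQuad q) {z₀ : Fin n → ℂ} (h : 0 < q z₀) :
    IsConicNhd {z | 0 < q z} z₀ where
  isOpen := isOpen_lt continuous_const hq.continuous
  isConic z hz t ht := by
    rw [Set.mem_ofPred_eq, hq.map_smul]
    exact mul_pos (pow_pos ht 2) hz
  zero_notMem := by simp [hq.map_zero]
  mem := h

end IsRQuad

/-! ### Conic neighborhoods -/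

lemma IsConic.infDist_smul_compl {V : Set (Fin n → ℂ)} (hV : IsConic V) {t : ℝ} (ht : 0 < t)
    (z : Fin n → ℂ) : Metric.infDist (t • z) Vᶜ = t * Metric.infDist z Vᶜ := by
  have hsmul : t • Vᶜ = Vᶜ := by
    ext w
    rw [Set.mem_smul_set_iff_inv_smul_mem₀ ht.ne']
    refine not_congr ⟨fun hw => ?_, fun hw => hV w hw t⁻¹ (inv_pos.2 ht)⟩
    simpa only [smul_inv_smul₀ ht.ne'] using hV _ hw t ht
  calc Metric.infDist (t • z) Vᶜ = Metric.infDist (t • z) (t • Vᶜ) := by rw [hsmul]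
    _ = t * Metric.infDist z Vᶜ := by rw [infDist_smul₀ ht.ne', Real.norm_of_nonneg ht.le]

namespace IsConicNhd

variable {V W : Set (Fin n → ℂ)} {z₀ : Fin n → ℂ}

lemma inter (hV : IsConicNhd V z₀) (hW : IsConicNhd W z₀) : IsConicNhd (V ∩ W) z₀ where
  isOpen := hV.isOpen.inter hW.isOpen
  isConic z hz t ht := ⟨hV.isConic z hz.1 t ht, hW.isConic z hz.2 t ht⟩
  zero_notMem h := hV.zero_notMem h.1
  mem := ⟨hV.mem, hW.mem⟩

lemma image (hV : IsConicNhd V z₀) (κ : (Fin n → ℂ) ≃ₗ[ℝ] (Fin n → ℂ)) :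
    IsConicNhd (κ '' V) (κ z₀) where
  isOpen := κ.toContinuousLinearEquiv.toHomeomorph.isOpenMap V hV.isOpen
  isConic := by
    rintro _ ⟨w, hw, rfl⟩ t ht
    exact ⟨t • w, hV.isConic w hw t ht, map_smul κ t w⟩
  zero_notMem := by
    rintro ⟨w, hw, hw0⟩
    exact hV.zero_notMem ((LinearEquiv.map_eq_zero_iff κ).1 hw0 ▸ hw)
  mem := Set.mem_image_of_mem κ hV.mem

lemma exists_separated (hV : IsConicNhd V z₀) :
    ∃ W, IsConicNhd W z₀ ∧ ∃ η : ℝ, 0 < η ∧ ∀ z ∈ W, ∀ w ∉ V, η * ‖z‖ ≤ ‖z - w‖ := by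
  have hdist : 0 < Metric.infDist z₀ Vᶜ :=
    (hV.isOpen.isClosed_compl.notMem_iff_infDist_pos ⟨0, hV.zero_notMem⟩).1 fun h => h hV.mem
  have hz₀ : 0 < ‖z₀‖ := norm_pos_iff.2 fun h => hV.zero_notMem (h ▸ hV.mem)
  set η := Metric.infDist z₀ Vᶜ / (2 * ‖z₀‖)
  refine ⟨{z | η * ‖z‖ < Metric.infDist z Vᶜ}, ⟨?_, fun z hz t ht => ?_, ?_, ?_⟩,
    η, by positivity, fun z hz w hw => ?_⟩
  · exact isOpen_lt (by fun_prop) (Metric.continuous_infDist_pt _)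
  · rw [Set.mem_ofPred_eq, norm_smul, Real.norm_of_nonneg ht.le, hV.isConic.infDist_smul_compl ht,
      mul_left_comm]
    exact mul_lt_mul_of_pos_left hz ht
  · simp [Metric.infDist_zero_of_mem (show (0 : Fin n → ℂ) ∈ Vᶜ from hV.zero_notMem)]
  · calc η * ‖z₀‖ = Metric.infDist z₀ Vᶜ / 2 := by simp only [η]; field_simp
      _ < Metric.infDist z₀ Vᶜ := half_lt_self hdist
  · exact hz.le.trans ((Metric.infDist_le_dist_of_mem hw).trans_eq (dist_eq_norm z w))

end IsConicNhd

/-! ### Coercivity along the graph of a linear isomorphism -/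

lemma exists_pos_mul_add_le {M c ε : ℝ} (hM : 0 ≤ M) (hc : 0 < c) (hε : 0 < ε) :
    ∃ δ : ℝ, 0 < δ ∧ ∀ d x y : ℝ, 0 ≤ d → 0 ≤ x → y ≤ M * (d + x) →
      δ * (x + y) ≤ c * d + ε * x := by
  refine ⟨min c ε / (M + 1), by positivity, fun d x y hd hx hy => ?_⟩
  calc min c ε / (M + 1) * (x + y) ≤ min c ε / (M + 1) * ((M + 1) * (d + x)) := by
        gcongr; linarith
    _ = min c ε * d + min c ε * x := by field_simp
    _ ≤ c * d + ε * x := by gcongr; exacts [min_le_left _ _, min_le_right _ _]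

lemma exists_pos_mul_eSq_add_eSq_le_of_source (κ : (Fin n → ℂ) →ₗ[ℝ] (Fin n → ℂ)) {c ε : ℝ}
    (hc : 0 < c) (hε : 0 < ε) :
    ∃ δ : ℝ, 0 < δ ∧ ∀ z w, δ * (eSq w + eSq z) ≤ c * eSq (z - κ w) + ε * eSq w := by
  obtain ⟨M, hM, hκ⟩ := exists_eSq_map_le κ
  obtain ⟨δ, hδ, h⟩ := exists_pos_mul_add_le (M := 2 * (1 + M)) (by positivity) hc hε
  refine ⟨δ, hδ, fun z w => h _ _ _ (eSq_nonneg _) (eSq_nonneg _) ?_⟩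
  calc eSq z ≤ 2 * (eSq (z - κ w) + eSq (κ w)) := by simpa using eSq_add_le (z - κ w) (κ w)
    _ ≤ 2 * (eSq (z - κ w) + M * eSq w) := by gcongr; exact hκ w
    _ ≤ 2 * (1 + M) * (eSq (z - κ w) + eSq w) := by
        linarith [mul_nonneg hM (eSq_nonneg (z - κ w)), eSq_nonneg w]

lemma exists_pos_mul_eSq_add_eSq_le_of_target (κ : (Fin n → ℂ) ≃ₗ[ℝ] (Fin n → ℂ)) {c ε : ℝ}
    (hc : 0 < c) (hε : 0 < ε) :
    ∃ δ : ℝ, 0 < δ ∧ ∀ z w, δ * (eSq z + eSq w) ≤ c * eSq (z - κ w) + ε * eSq z := by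
  obtain ⟨M, hM, hκ⟩ := exists_eSq_map_le (κ.symm : (Fin n → ℂ) →ₗ[ℝ] (Fin n → ℂ))
  obtain ⟨δ, hδ, h⟩ := exists_pos_mul_add_le (M := 2 * M) (by positivity) hc hε
  refine ⟨δ, hδ, fun z w => h _ _ _ (eSq_nonneg _) (eSq_nonneg _) ?_⟩
  calc eSq w ≤ M * eSq (κ w) := by simpa using hκ (κ w)
    _ ≤ M * (2 * (eSq (z - κ w) + eSq z)) := by
        gcongr
        have hsum := eSq_add_le (-(z - κ w)) z
        rwa [eSq_neg, neg_sub, sub_add_cancel] at hsum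
    _ = 2 * M * (eSq (z - κ w) + eSq z) := by ring

lemma IsConicNhd.exists_eSq_separated {V : Set (Fin n → ℂ)} {w₀ : Fin n → ℂ}
    (hV : IsConicNhd V w₀) (κ : (Fin n → ℂ) ≃ₗ[ℝ] (Fin n → ℂ)) :
    ∃ W, IsConicNhd W (κ w₀) ∧ ∃ η : ℝ, 0 < η ∧
      ∀ z ∈ W, ∀ w ∉ V, η * (eSq z + eSq w) ≤ eSq (z - κ w) := by
  obtain ⟨W, hW, η, hη, hsep⟩ := (hV.image κ).exists_separated
  set A : ℝ := n / η ^ 2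
  obtain ⟨δ, hδ, hcoer⟩ := exists_pos_mul_eSq_add_eSq_le_of_target κ one_pos one_pos
  refine ⟨W, hW, δ / (1 + A), by positivity, fun z hz w hw => ?_⟩
  have hzw : eSq z ≤ A * eSq (z - κ w) :=
    calc eSq z ≤ n * ‖z‖ ^ 2 := eSq_le_mul_sq_norm z
      _ = A * (η * ‖z‖) ^ 2 := by simp only [A]; field_simp
      _ ≤ A * ‖z - κ w‖ ^ 2 := by
          gcongr; exact hsep z hz _ fun h => hw ((κ.injective.mem_set_image).1 h)
      _ ≤ A * eSq (z - κ w) := by gcongr; exact sq_norm_le_eSq _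
  rw [div_mul_eq_mul_div, div_le_iff₀ (by positivity)]
  linarith [hcoer z w]

/-! ### Wavefront sets -/

lemma mem_wf_iff {Φ : (Fin n → ℂ) → ℝ} {u : (Fin n → ℂ) → ℂ} {z₀ : Fin n → ℂ} :
    z₀ ∈ wf Φ u ↔ z₀ ≠ 0 ∧ ∀ V, IsConicNhd V z₀ → ¬ HasGaussianDecayOn Φ u V := by
  refine and_congr_right fun _ => ⟨fun h V hV ⟨C, c, hc, hu⟩ => h ?_, ?_⟩
  · exact ⟨V, hV.isOpen, hV.isConic, hV.zero_notMem, hV.mem, max C 1, c, by positivity, hc,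
      fun z hz => norm_le_mul_exp_mono (hu z hz) (le_max_left _ _) le_rfl⟩
  · rintro h ⟨V, hVo, hVc, hV0, hVz, C, c, -, hc, hu⟩
    exact h V ⟨hVo, hVc, hV0, hVz⟩ ⟨C, c, hc, hu⟩

section Weights

variable {Φ Φt : (Fin n → ℂ) → ℝ} {u : (Fin n → ℂ) → ℂ}

lemma wf_anti (hle : ∀ z, Φt z ≤ Φ z) : wf Φ u ⊆ wf Φt u := by
  intro z₀ hz₀
  rw [mem_wf_iff] at hz₀ ⊢
  refine ⟨hz₀.1, fun V hV ⟨C, c, hc, hu⟩ => hz₀.2 V hV ⟨C, c, hc, fun z hz => ?_⟩⟩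
  exact norm_le_mul_exp_mono (hu z hz) le_rfl (by linarith [hle z])

lemma wf_subset_setOf_sub_nonpos (hq : IsRQuad (Φ - Φt)) (hu : HasSubgaussianGrowth Φt u) :
    wf Φ u ⊆ {z | Φ z - Φt z ≤ 0} := by
  intro z₀ hz₀
  obtain ⟨hz₀0, hwf⟩ := mem_wf_iff.1 hz₀
  by_contra hmem
  have hpos : 0 < Φ z₀ - Φt z₀ := not_le.1 hmem
  have hz₀pos := eSq_pos hz₀0
  set η := (Φ z₀ - Φt z₀) / (2 * eSq z₀)
  have hη : 0 < η := div_pos hpos (by positivity)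
  obtain ⟨C, hC⟩ := hu (η / 2) (half_pos hη)
  have hz₀η : 0 < (Φ - Φt - η • (eSq : (Fin n → ℂ) → ℝ)) z₀ := by
    have : η * eSq z₀ = (Φ z₀ - Φt z₀) / 2 := by simp only [η]; field_simp
    simp only [Pi.sub_apply, Pi.smul_apply, smul_eq_mul, this]
    linarith
  refine hwf _ ((hq.sub (isRQuad_eSq.const_smul η)).isConicNhd_setOf_pos hz₀η)
    ⟨C, η / 2, half_pos hη, fun z hz => norm_le_mul_exp_mono (hC z) le_rfl ?_⟩
  simp only [Set.mem_ofPred_eq, Pi.sub_apply, Pi.smul_apply, smul_eq_mul] at hz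
  linarith

lemma wf_inter_setOf_sub_nonpos_subset (hq : IsRQuad (Φ - Φt)) :
    wf Φt u ∩ {z | Φ z - Φt z ≤ 0} ⊆ wf Φ u := by
  rintro z₀ ⟨hz₀, hrad⟩
  rw [mem_wf_iff] at hz₀ ⊢
  refine ⟨hz₀.1, fun V hV ⟨C, c, hc, hu⟩ => ?_⟩
  have hz₀c : 0 < ((c / 2) • (eSq : (Fin n → ℂ) → ℝ) - (Φ - Φt)) z₀ := by
    have := mul_pos (half_pos hc) (eSq_pos hz₀.1)
    simp only [Pi.sub_apply, Pi.smul_apply, smul_eq_mul]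
    linarith [Set.mem_ofPred.1 hrad]
  refine hz₀.2 _ (hV.inter (((isRQuad_eSq.const_smul _).sub hq).isConicNhd_setOf_pos hz₀c))
    ⟨C, c / 2, half_pos hc, fun z ⟨hzV, hz⟩ => norm_le_mul_exp_mono (hu z hzV) le_rfl ?_⟩
  simp only [Set.mem_ofPred_eq, Pi.sub_apply, Pi.smul_apply, smul_eq_mul] at hz
  linarith

lemma wf_eq_wf_inter_of_le (hq : IsRQuad (Φ - Φt)) (hle : ∀ z, Φt z ≤ Φ z)
    (hu : HasSubgaussianGrowth Φt u) : wf Φ u = wf Φt u ∩ {z | Φ z - Φt z = 0} := by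
  have hrad : {z | Φ z - Φt z = 0} = {z | Φ z - Φt z ≤ 0} :=
    Set.ext fun z => ⟨le_of_eq, fun h => le_antisymm h (sub_nonneg.2 (hle z))⟩
  rw [hrad]
  exact (Set.subset_inter (wf_anti hle) (wf_subset_setOf_sub_nonpos hq hu)).antisymm
    (wf_inter_setOf_sub_nonpos_subset hq)

end Weights

/-! ### Bergman-form operators -/

section Berg

variable {Ψ : (Fin n → ℂ) → (Fin n → ℂ) → ℂ} {φ₁ φ₂ : (Fin n → ℂ) → ℝ}
  {κ : (Fin n → ℂ) ≃ₗ[ℝ] (Fin n → ℂ)} {f : (Fin n → ℂ) → ℂ}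

lemma norm_berg_le (a : ℂ) {φ : (Fin n → ℂ) → ℝ} {z : Fin n → ℂ} {δ K s : ℝ} (hδ : 0 < δ)
    (hf : ∀ w, ‖f w‖ ≤ K * Real.exp (2 * φ w - 2 * (Ψ z (star w)).re - δ * eSq w + s)) :
    ‖berg a Ψ φ f z‖ ≤ K * (‖a‖ * ∫ w : Fin n → ℂ, Real.exp (-δ * eSq w)) * Real.exp s := by
  have hintegrand : ∀ w, ‖Complex.exp (2 * Ψ z (star w)) * f w * (Real.exp (-2 * φ w) : ℂ)‖ ≤
      K * Real.exp s * Real.exp (-δ * eSq w) := fun w =>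
    calc ‖Complex.exp (2 * Ψ z (star w)) * f w * (Real.exp (-2 * φ w) : ℂ)‖
        = Real.exp (2 * (Ψ z (star w)).re - 2 * φ w) * ‖f w‖ := by
          rw [norm_mul, norm_mul, Complex.norm_exp, Complex.norm_real, Real.norm_eq_abs,
            Real.abs_exp, mul_right_comm, ← Real.exp_add]
          simp [sub_eq_add_neg]
      _ ≤ Real.exp (2 * (Ψ z (star w)).re - 2 * φ w) *
            (K * Real.exp (2 * φ w - 2 * (Ψ z (star w)).re - δ * eSq w + s)) := by
          gcongr; exact hf w
      _ = K * Real.exp s * Real.exp (-δ * eSq w) := by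
          rw [mul_left_comm, mul_assoc, ← Real.exp_add, ← Real.exp_add]
          ring_nf
  have hint := norm_integral_le_of_norm_le ((integrable_exp_neg_mul_eSq hδ).const_mul _)
    (Filter.Eventually.of_forall hintegrand)
  rw [integral_const_mul] at hint
  calc ‖berg a Ψ φ f z‖
      ≤ ‖a‖ * (K * Real.exp s * ∫ w : Fin n → ℂ, Real.exp (-δ * eSq w)) := by
        rw [berg, norm_mul]; gcongr
    _ = K * (‖a‖ * ∫ w : Fin n → ℂ, Real.exp (-δ * eSq w)) * Real.exp s := by ring

lemma HasSubgaussianGrowth.berg (a : ℂ) (hΨ : ConcentratesOnGraph Ψ φ₁ φ₂ κ)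
    (hf : HasSubgaussianGrowth φ₂ f) : HasSubgaussianGrowth φ₁ (berg a Ψ φ₂ f) := by
  intro ε hε
  obtain ⟨c, hc, hΨ⟩ := hΨ
  obtain ⟨δ, hδ, hcoer⟩ := exists_pos_mul_eSq_add_eSq_le_of_target κ hc hε
  obtain ⟨K, hK⟩ := hf (δ / 2) (half_pos hδ)
  refine ⟨_, fun z => norm_berg_le a (half_pos hδ) fun w =>
    norm_le_mul_exp_mono (hK w) le_rfl ?_⟩
  linarith [hΨ z w, hcoer z w, mul_nonneg hδ.le (eSq_nonneg z)]

lemma HasGaussianDecayOn.exists_berg (a : ℂ) (hΨ : ConcentratesOnGraph Ψ φ₁ φ₂ κ)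
    (hf : HasSubgaussianGrowth φ₂ f) {V : Set (Fin n → ℂ)} {w₀ : Fin n → ℂ}
    (hV : IsConicNhd V w₀) (hfV : HasGaussianDecayOn φ₂ f V) :
    ∃ W, IsConicNhd W (κ w₀) ∧ HasGaussianDecayOn φ₁ (berg a Ψ φ₂ f) W := by
  obtain ⟨c, hc, hΨ⟩ := hΨ
  obtain ⟨K₁, c₁, hc₁, hK₁⟩ := hfV
  obtain ⟨W, hW, η, hη, hsep⟩ := hV.exists_eSq_separated κ
  obtain ⟨δ₁, hδ₁, hcoer⟩ :=
    exists_pos_mul_eSq_add_eSq_le_of_source (κ : (Fin n → ℂ) →ₗ[ℝ] (Fin n → ℂ)) hc hc₁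
  set δ₂ := c * η / 2
  have hδ₂ : 0 < δ₂ := by positivity
  obtain ⟨K₂, hK₂⟩ := hf δ₂ hδ₂
  set δ := min δ₁ δ₂
  have hδ : 0 < δ := lt_min hδ₁ hδ₂
  refine ⟨W, hW, _, δ, hδ, fun z hz =>
    norm_berg_le (K := max K₁ K₂) a hδ fun w => ?_⟩
  have hzw : 0 ≤ eSq w + eSq z := add_nonneg (eSq_nonneg w) (eSq_nonneg z)
  by_cases hw : w ∈ V
  · have hin : δ * (eSq w + eSq z) ≤ c * eSq (z - κ w) + c₁ * eSq w :=
      (mul_le_mul_of_nonneg_right (min_le_left _ _) hzw).trans (hcoer z w)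
    exact norm_le_mul_exp_mono (hK₁ w hw) (le_max_left _ _) (by linarith [hΨ z w])
  · have hout : (δ₂ + δ) * (eSq w + eSq z) ≤ c * eSq (z - κ w) :=
      calc (δ₂ + δ) * (eSq w + eSq z) ≤ (δ₂ + δ₂) * (eSq w + eSq z) := by
            gcongr; exact min_le_right _ _
        _ = c * (η * (eSq z + eSq w)) := by simp only [δ₂]; ring
        _ ≤ c * eSq (z - κ w) := by gcongr; exact hsep z hz w hw
    refine norm_le_mul_exp_mono (hK₂ w) (le_max_right _ _) ?_
    linarith [hΨ z w, mul_nonneg hδ₂.le (eSq_nonneg z)]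

lemma wf_berg_subset (a : ℂ) (hΨ : ConcentratesOnGraph Ψ φ₁ φ₂ κ)
    (hf : HasSubgaussianGrowth φ₂ f) : wf φ₁ (berg a Ψ φ₂ f) ⊆ κ '' wf φ₂ f := by
  intro z₀ hz₀
  rw [mem_wf_iff] at hz₀
  refine ⟨κ.symm z₀, mem_wf_iff.2 ⟨by simpa using hz₀.1, fun V hV hfV => ?_⟩,
    κ.apply_symm_apply z₀⟩
  obtain ⟨W, hW, hdecay⟩ := hfV.exists_berg a hΨ hf hV
  rw [κ.apply_symm_apply] at hW
  exact hz₀.2 W hW hdecay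

lemma wf_berg_eq_image {a b : ℂ} {Ψ' : (Fin n → ℂ) → (Fin n → ℂ) → ℂ}
    (hΨ : ConcentratesOnGraph Ψ φ₁ φ₂ κ) (hΨ' : ConcentratesOnGraph Ψ' φ₂ φ₁ κ.symm)
    (hf : HasSubgaussianGrowth φ₂ f) (hinv : berg b Ψ' φ₁ (berg a Ψ φ₂ f) = f) :
    wf φ₁ (berg a Ψ φ₂ f) = κ '' wf φ₂ f := by
  refine (wf_berg_subset a hΨ hf).antisymm ?_
  have hback := wf_berg_subset b hΨ' (hf.berg a hΨ)
  rw [hinv] at hback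
  exact Set.image_subset_iff.2 fun w hw => by
    obtain ⟨z, hz, rfl⟩ := hback hw
    simpa using hz

end Berg

end

theorem stmt_13_general {n : ℕ} {Φ Φt : (Fin n → ℂ) → ℝ}
    (hq : IsRQuad (Φ - Φt)) (hle : ∀ z, Φt z ≤ Φ z) {κ : (Fin n → ℂ) ≃ₗ[ℝ] (Fin n → ℂ)}
    {a b : ℂ} {Ψ Ψt : (Fin n → ℂ) → (Fin n → ℂ) → ℂ}
    (hΨ : ConcentratesOnGraph Ψ Φt Φ κ) (hΨt : ConcentratesOnGraph Ψt Φ Φt κ.symm)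
    {u : (Fin n → ℂ) → ℂ} (hu : HasSubgaussianGrowth Φ u)
    (hinv : berg b Ψt Φt (berg a Ψ Φ u) = u) :
    wf Φ (berg a Ψ Φ u) = (κ '' wf Φ u) ∩ {z | Φ z - Φt z = 0} := by
  rw [wf_eq_wf_inter_of_le hq hle (hu.berg a hΨ), wf_berg_eq_image hΨ hΨt hu hinv]

/-- Combining Statements 9–12: with `Φ̃ ≤ Φ`, `κ♭` an `ℝ`-linear
isomorphism preserving `Rad(Φ − Φ̃)`, a direct Bergman quantization `G` (with phase `Ψ`,
real part `Φ̃(z) + Φ(w) − R(z,w)`, `R ≍ |z − κ♭(w)|²`), an inverse quantization `G̃`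
(with phase `Ψ̃` satisfying `2 Re Ψ̃(z,w̄) − Φ(z) − Φ̃(w) ≤ −c'|z − (κ♭)⁻¹(w)|²`), and
`G̃ ∘ G = id` on functions of polynomially weighted growth, one has
`WF^{1/2}_Φ(Gu) = κ♭(WF^{1/2}_Φ(u)) ∩ Rad(Φ − Φ̃)` for all such `u`. -/
theorem stmt_13 (n : ℕ) (hn : 1 ≤ n) (Φ Φt : (Fin n → ℂ) → ℝ)
    (hΦ : IsSPSH Φ) (hΦt : IsSPSH Φt) (hle : ∀ z, Φt z ≤ Φ z)
    (κ : (Fin n → ℂ) ≃ₗ[ℝ] (Fin n → ℂ))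
    (hrad : (fun w => κ w) '' {z : Fin n → ℂ | Φ z - Φt z = 0}
        = {z : Fin n → ℂ | Φ z - Φt z = 0})
    -- (i) the direct quantization `G`
    (a : ℂ) (Ψ : (Fin n → ℂ) → (Fin n → ℂ) → ℂ) (hΨ : IsCQuad2 Ψ)
    (R : (Fin n → ℂ) → (Fin n → ℂ) → ℝ) (hRq : IsRQuadPair R)
    (hR0 : ∀ z w, 0 ≤ R z w)
    (hre : ∀ z w : Fin n → ℂ, 2 * (Ψ z (star w)).re = Φt z + Φ w - R z w)
    (C c : ℝ) (hC : 0 < C) (hc : 0 < c)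
    (hsand : ∀ z w : Fin n → ℂ, c * eSq (z - κ w) ≤ R z w ∧ R z w ≤ C * eSq (z - κ w))
    -- (ii) the inverse quantization `G̃`
    (at_ : ℂ) (Ψt : (Fin n → ℂ) → (Fin n → ℂ) → ℂ) (hΨt : IsCQuad2 Ψt)
    (c' : ℝ) (hc' : 0 < c')
    (hest : ∀ z w : Fin n → ℂ,
        2 * (Ψt z (star w)).re - Φ z - Φt w ≤ -c' * eSq (z - κ.symm w))
    -- (iii) `G̃ (G u) = u` on functions of polynomially weighted growth
    (hinv : ∀ u : (Fin n → ℂ) → ℂ, Differentiable ℂ u →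
        (∃ C₀ : ℝ, 0 < C₀ ∧ ∃ N : ℝ, ∀ z : Fin n → ℂ, ‖u z‖ ≤ C₀ * jb z ^ N * Real.exp (Φ z)) →
        berg at_ Ψt Φt (berg a Ψ Φ u) = u) :
    ∀ u : (Fin n → ℂ) → ℂ, Differentiable ℂ u →
      (∃ C₀ : ℝ, 0 < C₀ ∧ ∃ N : ℝ, ∀ z : Fin n → ℂ, ‖u z‖ ≤ C₀ * jb z ^ N * Real.exp (Φ z)) →
      wf Φ (berg a Ψ Φ u) =
        ((fun w => κ w) '' wf Φ u) ∩ {z : Fin n → ℂ | Φ z - Φt z = 0} := by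
  intro u hu hgrowth
  have hconc : ConcentratesOnGraph Ψ Φt Φ κ :=
    ⟨c, hc, fun z w => by linarith [hre z w, (hsand z w).1]⟩
  have ⟨C₀, hC₀, N, hN⟩ := hgrowth
  exact stmt_13_general (hΦ.1.sub hΦt.1) hle hconc ⟨c', hc', hest⟩
    (.of_norm_le_jb_rpow hC₀.le hN) (hinv u hu hgrowth)
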